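/- arXiv:2306.11856 — 2 statements merged into one kernel-verified Lean document; each statement's English description precedes it below -/
import Mathlib

section
/- Let W be an inner product space over ℂ and let L₋₁, L₀, L₁ : W →ₗ[ℂ] W be linear operators satisfying ⟨L₋₁u, v⟩ = ⟨u, L₁v⟩ and ⟨L₀u, v⟩ = ⟨u, L₀v⟩ for all u, v ∈ W, together with the commutation relations L₁ ∘ L₋₁ − L₋₁ ∘ L₁ = 2·L₀ and L₀ ∘ L₁ − L₁ ∘ L₀ = −L₁. If w ∈ W is nonzero, L₀w = s • w for some s ∈ ℂ, and L₁^k w = 0 for some k ∈ ℕ, then s is real and nonnegative (i.e. s.im = 0 and 0 ≤ s.re). -/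
open scoped InnerProductSpace

/-- With `L₋₁, L₀, L₁` as before and additionally `L₀L₁ - L₁L₀ = -L₁`,
if `w ≠ 0`, `L₀ w = s • w` and `L₁ᵏ w = 0` for some `k`, then `s` is real and nonnegative. -/
theorem stmt1 {W : Type*} [NormedAddCommGroup W] [InnerProductSpace ℂ W]
    (Lm1 L0 L1 : W →ₗ[ℂ] W)
    (hadj1 : ∀ u v : W, ⟪Lm1 u, v⟫_ℂ = ⟪u, L1 v⟫_ℂ)
    (hadj0 : ∀ u v : W, ⟪L0 u, v⟫_ℂ = ⟪u, L0 v⟫_ℂ)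
    (hcomm : L1 ∘ₗ Lm1 - Lm1 ∘ₗ L1 = 2 • L0)
    (hcomm' : L0 ∘ₗ L1 - L1 ∘ₗ L0 = -L1)
    (w : W) (hw : w ≠ 0) (s : ℂ) (hs : L0 w = s • w)
    (k : ℕ) (hk : (L1 ^ k) w = 0) :
    s.im = 0 ∧ 0 ≤ s.re := by
  induction k generalizing w s with
  | zero => exact absurd (by simpa using hk) hw
  | succ k ih =>
    by_cases h : L1 w = 0
    · have h1 : L1 (Lm1 w) = (2 * s) • w := by
        have := LinearMap.congr_fun hcomm w
        simp only [LinearMap.sub_apply, LinearMap.comp_apply, h, map_zero, sub_zero,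
          LinearMap.smul_apply, hs] at this
        rw [this, mul_smul, two_smul, two_smul]
      have h2 := hadj1 w (Lm1 w)
      rw [h1, inner_smul_right, inner_self_eq_norm_sq_to_K, inner_self_eq_norm_sq_to_K] at h2
      have hp : 0 < ‖w‖ ^ 2 := by positivity
      have h3 : ((‖Lm1 w‖ ^ 2 : ℝ) : ℂ) = 2 * s * ((‖w‖ ^ 2 : ℝ) : ℂ) := by
        push_cast
        exact h2
      have hre := congrArg Complex.re h3
      have him := congrArg Complex.im h3
      rw [Complex.re_mul_ofReal, Complex.ofReal_re] at hre
      rw [Complex.im_mul_ofReal, Complex.ofReal_im] at him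
      simp only [Complex.mul_re, Complex.mul_im, Complex.re_ofNat, Complex.im_ofNat, zero_mul,
        sub_zero, add_zero] at hre him
      constructor
      · rcases mul_eq_zero.mp him.symm with h | h
        · linarith
        · exact absurd h hp.ne'
      · by_contra hneg
        push Not at hneg
        nlinarith [sq_nonneg ‖Lm1 w‖]
    · have h1 : L0 (L1 w) = (s - 1) • L1 w := by
        have := LinearMap.congr_fun hcomm' w
        simp only [LinearMap.sub_apply, LinearMap.comp_apply, LinearMap.neg_apply, hs,
          map_smul] at this
        rw [sub_smul, one_smul, sub_eq_iff_eq_add.mp this]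
        abel
      obtain ⟨a, b⟩ := ih (L1 w) h (s - 1) h1 (by rw [pow_succ] at hk; exact hk)
      simp at a b
      exact ⟨a, by linarith⟩
end

section
/- Let c : ℝ → ℂ be a summable function (so in particular its support is countable). If for every t ∈ ℝ the unconditional sum ∑'_{s∈ℝ} c(s)·exp(i·s·t) equals 0, then c(s) = 0 for every s ∈ ℝ. -/
open MeasureTheory ProbabilityTheory Filter Topology in
/-- If `c : ℝ → ℂ` is summable and `∑'_{s} c s · exp(i s t) = 0` for all
real `t`, then `c = 0`. -/
theorem stmt3 (c : ℝ → ℂ) (hc : Summable c)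
    (h : ∀ t : ℝ, ∑' s : ℝ, c s * Complex.exp (Complex.I * (s : ℂ) * (t : ℂ)) = 0) :
    ∀ s : ℝ, c s = 0 := by
  intro s₀
  have hcn : Summable (fun s => ‖c s‖) := hc.norm
  have hcount : (Function.support c).Countable := hc.countable_support
  have : Countable (Function.support c) := hcount.to_subtype
  have key : ∀ n : ℕ, ∑' s : ℝ, c s * Complex.exp (-((n : ℝ) * (s - s₀) ^ 2 / 2 : ℝ)) = 0 := by
    intro n
    have hF : ∀ (s t : ℝ), ‖c s * Complex.exp (((s - s₀ : ℝ) : ℂ) * t * Complex.I)‖ = ‖c s‖ := by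
      intro s t
      rw [norm_mul, ← Complex.ofReal_mul, Complex.norm_exp_ofReal_mul_I, mul_one]
    have hint := integral_tsum_of_summable_integral_norm (μ := gaussianReal 0 (n : NNReal))
      (F := fun (s : Function.support c) (t : ℝ) =>
        c s * Complex.exp (((s - s₀ : ℝ) : ℂ) * t * Complex.I))
      (by
        intro s
        refine Integrable.of_bound (C := ‖c s‖) ?_ ?_
        · exact Continuous.aestronglyMeasurable (by fun_prop)
        · exact ae_of_all _ fun t => (hF s t).le)
      (by
        simp only [hF]
        simp only [integral_const, probReal_univ, one_smul]
        exact hcn.comp_injective Subtype.val_injective)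
    have hz : ∀ t : ℝ, ∑' s : Function.support c,
        c s * Complex.exp (((s - s₀ : ℝ) : ℂ) * t * Complex.I) = 0 := by
      intro t
      rw [tsum_subtype_eq_of_support_subset
        (f := fun s : ℝ => c s * Complex.exp (((s - s₀ : ℝ) : ℂ) * t * Complex.I))]
      · have : ∀ s : ℝ, c s * Complex.exp (((s - s₀ : ℝ) : ℂ) * t * Complex.I)
            = c s * Complex.exp (Complex.I * (s : ℂ) * (t : ℂ)) *
              Complex.exp (-(s₀ * t * Complex.I)) := by
          intro s
          rw [mul_assoc (c s), ← Complex.exp_add]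
          congr 2
          push_cast
          ring
        simp only [this, tsum_mul_right, h, zero_mul]
      · intro s hs
        exact left_ne_zero_of_mul hs
    simp only [hz, integral_zero, integral_const_mul] at hint
    rw [← tsum_subtype_eq_of_support_subset (s := Function.support c), ← hint]
    · refine tsum_congr fun s => ?_
      congr 1
      have := charFun_gaussianReal (μ := 0) (v := (n : NNReal)) (s - s₀ : ℝ)
      rw [charFun_apply_real] at this
      rw [this]
      congr 1
      push_cast
      ring
    · intro s hs
      exact left_ne_zero_of_mul hs
  have hlim : Tendsto (fun n : ℕ => ∑' s : ℝ, c s * Complex.exp (-((n : ℝ) * (s - s₀) ^ 2 / 2 : ℝ)))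
      atTop (𝓝 (∑' s : ℝ, if s = s₀ then c s else 0)) := by
    refine tendsto_tsum_of_dominated_convergence hcn ?_ ?_
    · intro s
      split_ifs with hs
      · simp [hs]
      · rw [← mul_zero (c s)]
        refine Tendsto.const_mul _ ?_
        rw [tendsto_zero_iff_norm_tendsto_zero]
        simp only [← Complex.ofReal_neg, Complex.norm_exp_ofReal]
        refine Real.tendsto_exp_neg_atTop_nhds_zero.comp ?_
        have hp : 0 < (s - s₀) ^ 2 / 2 := by
          have := sub_ne_zero.2 hs
          positivity
        simp only [mul_div_assoc]
        exact tendsto_natCast_atTop_atTop.atTop_mul_const hp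
    · refine Eventually.of_forall fun n s => ?_
      rw [norm_mul, ← Complex.ofReal_neg, Complex.norm_exp_ofReal]
      refine mul_le_of_le_one_right (norm_nonneg _) (Real.exp_le_one_iff.2 ?_)
      have : 0 ≤ (n : ℝ) * (s - s₀) ^ 2 / 2 := by positivity
      linarith
  simp only [key, tsum_ite_eq] at hlim
  exact (tendsto_nhds_unique hlim tendsto_const_nhds)
end
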